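/- Let B = 2π/√6. There exist constants C > 0 and X₀ such that for all integers X ≥ X₀ and all integers r with |r| ≤ X^{3/4}, the partition function satisfies |p(X + r)/p(X) − e^{B·r/(2√X)}| ≤ C·e^{B·r/(2√X)}·(1/X + |r|/X + r²/X^{3/2}); that is, p(X+r)/p(X) = e^{Br/(2√X)}·(1 + O(1/X + |r|/X + |r|²/X^{3/2})) uniformly for |r| ≤ X^{3/4}. -/

import Mathlib

open scoped BigOperators

/-- `IsSCC n l k` says that the list `l = (a_1, ..., a_s)` of nonnegative integers
is a strongly concave composition of `n` with central part at (1-indexed) position `k`: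
`a_1 > a_2 > ... > a_{k-1} > a_k < a_{k+1} < ... < a_s` and `a_1 + ... + a_s = n`. -/
def IsSCC (n : ℕ) (l : List ℕ) (k : ℕ) : Prop :=
  1 ≤ k ∧ k ≤ l.length ∧ l.sum = n ∧
  (∀ i j : Fin l.length, (i : ℕ) < j → (j : ℕ) < k → l.get j < l.get i) ∧
  (∀ i j : Fin l.length, k - 1 ≤ (i : ℕ) → (i : ℕ) < j → l.get i < l.get j)

/-- The rank `s - 2k + 1` of a strongly concave composition with `s` parts and
central part at position `k`. -/
def sccRank (l : List ℕ) (k : ℕ) : ℤ := (l.length : ℤ) - 2 * k + 1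

/-- `Vd m n` is the number of strongly concave compositions of `n` with rank `m`. -/
noncomputable def Vd (m : ℤ) (n : ℕ) : ℕ :=
  Set.ncard {p : List ℕ × ℕ | IsSCC n p.1 p.2 ∧ sccRank p.1 p.2 = m}

/-- `VdTotal n` is the total number of strongly concave compositions of `n`. -/
noncomputable def VdTotal (n : ℕ) : ℕ :=
  Set.ncard {p : List ℕ × ℕ | IsSCC n p.1 p.2}

/-- The partition function, extended by `0` to negative integers. -/
def partitionCount (k : ℤ) : ℕ :=
  if 0 ≤ k then Fintype.card (Nat.Partition k.toNat) else 0

open Real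

/-!
For `s > 0` consider the probability measure on `ℕ` giving `n` the mass `p(n) e^{-ns} / P(e^{-s})`,
where `P` is the partition generating function. Since `log P(q) = ∑ q^{jm} / m` over `j, m ≥ 1`, its
characteristic function is that of a compound Poisson law with weights `e^{-sjm} / m` at `jm`: the
`k`-th moment of these weights is `O(s^{-k-1})` and the first one is `π² / (6 s²) + O(1/s)`. Hence,
for `s = π / √(6 n)`, the law has standard deviation of order `s^{-3/2}` and is centred at `n` up to
`O(1/s)`, so that the Fourier integrals for the masses at `n` and `n + 1` differ by a factor
`1 + O(s²)`. This says `p(n + 1) / p(n) = e^s (1 + O(1/n))`; taking logarithms, summing these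
increments between `X` and `X + r`, and exponentiating gives the claim.
-/

/-- The number `p(n)` of partitions of the natural number `n`. -/
noncomputable def numPartitions (n : ℕ) : ℕ := Fintype.card n.Partition

/-- The number of partitions of `n` all of whose parts are at most `K`. -/
noncomputable def numPartitionsLE (K n : ℕ) : ℕ := (Nat.Partition.restricted n (· ≤ K)).card

lemma partitionCount_natCast (n : ℕ) : partitionCount n = numPartitions n := by
  simp only [partitionCount, Nat.cast_nonneg, if_true, Int.toNat_natCast, numPartitions]

lemma numPartitions_pos (n : ℕ) : 0 < numPartitions n :=
  Fintype.card_pos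

lemma numPartitionsLE_le (K n : ℕ) : numPartitionsLE K n ≤ numPartitions n :=
  Finset.card_le_univ _

lemma numPartitionsLE_eq_of_le {K n : ℕ} (h : n ≤ K) : numPartitionsLE K n = numPartitions n := by
  rw [numPartitionsLE, Nat.Partition.restricted, Finset.filter_true_of_mem, Finset.card_univ,
    numPartitions]
  exact fun p _ i hi => (Nat.Partition.le_of_mem_parts hi).trans h

section PowerSeriesEvaluation

open Finset PowerSeries

variable {𝕜 : Type*} [NormedField 𝕜]

/-- The power series `f` converges absolutely at the point `q`, with value `a`. -/
structure HasAbsEval (f : 𝕜⟦X⟧) (q a : 𝕜) : Prop where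
  summable_norm : Summable fun n => ‖coeff n f * q ^ n‖
  hasSum : HasSum (fun n => coeff n f * q ^ n) a

/-- The geometric series `1 + X ^ m + X ^ (2 * m) + ⋯`. -/
noncomputable def geomSeries (𝕜 : Type*) [NormedField 𝕜] (m : ℕ) : 𝕜⟦X⟧ :=
  mk fun n => if m ∣ n then 1 else 0

open WithPiTopology in
lemma tsum_X_pow_mul {m : ℕ} (hm : m ≠ 0) : ∑' j : ℕ, (X : 𝕜⟦X⟧) ^ (m * j) = geomSeries 𝕜 m := by
  refine HasSum.tsum_eq ((hasSum_iff_hasSum_coeff 𝕜).2 fun n => ?_)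
  simp only [coeff_X_pow, geomSeries, coeff_mk]
  by_cases hmn : m ∣ n
  · obtain ⟨k, rfl⟩ := hmn
    simpa [Nat.mul_right_inj hm, eq_comm] using hasSum_ite_eq k (1 : 𝕜)
  · have hne (j : ℕ) : n ≠ m * j := fun h => hmn ⟨j, h⟩
    simp [hmn, hne]

lemma mk_numPartitionsLE (K : ℕ) :
    (mk fun n => (numPartitionsLE K n : 𝕜)) = ∏ i ∈ range K, geomSeries 𝕜 (i + 1) := by
  open WithPiTopology in
  refine (Nat.Partition.hasProd_powerSeriesMk_card_restricted 𝕜 (· ≤ K)).unique ?_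
  rw [← prod_congr rfl fun i hi => (if_pos (Nat.succ_le_of_lt (mem_range.1 hi))).trans
    (tsum_X_pow_mul (𝕜 := 𝕜) i.succ_ne_zero)]
  exact hasProd_prod_of_ne_finset_one fun i hi => if_neg fun h => hi (mem_range.2 h)

namespace HasAbsEval

variable {f g : 𝕜⟦X⟧} {q a b : 𝕜}

lemma one (q : 𝕜) : HasAbsEval 1 q 1 where
  summable_norm := summable_of_ne_finset_zero (s := {0}) fun n hn => by
    simp [coeff_one, notMem_singleton.1 hn]
  hasSum := by
    simpa [coeff_one] using hasSum_single (f := fun n => coeff n (1 : 𝕜⟦X⟧) * q ^ n) 0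
      fun n hn => by simp [coeff_one, hn]

lemma mul [CompleteSpace 𝕜] (hf : HasAbsEval f q a) (hg : HasAbsEval g q b) :
    HasAbsEval (f * g) q (a * b) := by
  have cauchy (n : ℕ) : coeff n (f * g) * q ^ n =
      ∑ x ∈ antidiagonal n, coeff x.1 f * q ^ x.1 * (coeff x.2 g * q ^ x.2) := by
    rw [coeff_mul, sum_mul]
    refine sum_congr rfl fun x hx => ?_
    rw [← mem_antidiagonal.1 hx, pow_add]
    ring
  have hsum : Summable fun n => ‖coeff n (f * g) * q ^ n‖ := by
    simpa only [cauchy] using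
      summable_norm_sum_mul_antidiagonal_of_summable_norm hf.summable_norm hg.summable_norm
  refine ⟨hsum, ?_⟩
  rw [hsum.of_norm.hasSum_iff, tsum_congr cauchy,
    ← tsum_mul_tsum_eq_tsum_sum_antidiagonal_of_summable_norm hf.summable_norm hg.summable_norm,
    hf.hasSum.tsum_eq, hg.hasSum.tsum_eq]

lemma prod [CompleteSpace 𝕜] {ι : Type*} {f : ι → 𝕜⟦X⟧} {a : ι → 𝕜} (s : Finset ι)
    (h : ∀ i ∈ s, HasAbsEval (f i) q (a i)) :
    HasAbsEval (∏ i ∈ s, f i) q (∏ i ∈ s, a i) := by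
  induction s using Finset.cons_induction with
  | empty => exact one q
  | cons i s hi ih =>
    simp only [prod_cons]
    exact (h i (mem_cons_self i s)).mul (ih fun j hj => h j (mem_cons_of_mem hj))

lemma geom {m : ℕ} (hm : m ≠ 0) (hq : ‖q‖ < 1) :
    HasAbsEval (geomSeries 𝕜 m) q (1 - q ^ m)⁻¹ where
  summable_norm := by
    refine (summable_geometric_of_lt_one (norm_nonneg q) hq).of_nonneg_of_le
      (fun _ => norm_nonneg _) fun n => ?_
    rw [geomSeries, coeff_mk, ite_mul, one_mul, zero_mul]
    split_ifs <;> simp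
  hasSum := by
    have hqm : ‖q ^ m‖ < 1 := by rw [norm_pow]; exact pow_lt_one₀ (norm_nonneg q) hq hm
    have hinj : Function.Injective (m * ·) := mul_right_injective₀ hm
    rw [← hinj.hasSum_iff]
    · simpa [Function.comp_def, geomSeries, pow_mul] using hasSum_geometric_of_norm_lt_one hqm
    · intro n hn
      rw [geomSeries, coeff_mk, if_neg fun ⟨j, hj⟩ => hn ⟨j, hj.symm⟩, zero_mul]

end HasAbsEval

lemma hasAbsEval_mk_numPartitionsLE [CompleteSpace 𝕜] {q : 𝕜} (K : ℕ) (hq : ‖q‖ < 1) :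
    HasAbsEval (mk fun n => (numPartitionsLE K n : 𝕜)) q (∏ i ∈ range K, (1 - q ^ (i + 1))⁻¹) := by
  rw [mk_numPartitionsLE]
  exact .prod _ fun i _ => .geom i.succ_ne_zero hq

end PowerSeriesEvaluation

section GeneratingFunction

open Finset Filter Topology

variable {q : ℂ}

/-- The terms of the expansion `-∑ₖ log (1 - q ^ (k + 1)) = ∑ₖ ∑ₘ q ^ ((k + 1) (m + 1)) / (m + 1)`
of the logarithm of Euler's product. -/
noncomputable def eulerLogTerm (q : ℂ) (x : ℕ × ℕ) : ℂ :=
  q ^ ((x.1 + 1) * (x.2 + 1)) / (x.2 + 1)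

lemma summable_eulerLogTerm (hq : ‖q‖ < 1) : Summable (eulerLogTerm q) := by
  have hgeom := summable_geometric_of_lt_one (norm_nonneg q) hq
  refine .of_norm_bounded (hgeom.mul_of_nonneg hgeom (fun _ => by positivity)
    fun _ => by positivity) fun x => ?_
  have hden : 1 ≤ ‖(x.2 : ℂ) + 1‖ := by
    rw [← Nat.cast_add_one, Complex.norm_natCast]
    exact_mod_cast Nat.le_add_left 1 x.2
  calc ‖eulerLogTerm q x‖ = ‖q‖ ^ ((x.1 + 1) * (x.2 + 1)) / ‖(x.2 : ℂ) + 1‖ := by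
        rw [eulerLogTerm, norm_div, norm_pow]
    _ ≤ ‖q‖ ^ ((x.1 + 1) * (x.2 + 1)) := div_le_self (by positivity) hden
    _ ≤ ‖q‖ ^ (x.1 + x.2) := pow_le_pow_of_le_one (norm_nonneg _) hq.le (by nlinarith)
    _ = ‖q‖ ^ x.1 * ‖q‖ ^ x.2 := pow_add _ _ _

lemma hasSum_eulerLogTerm_fiber (hq : ‖q‖ < 1) (k : ℕ) :
    HasSum (fun m => eulerLogTerm q (k, m)) (-Complex.log (1 - q ^ (k + 1))) := by
  have hqk : ‖q ^ (k + 1)‖ < 1 := by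
    rw [norm_pow]
    exact pow_lt_one₀ (norm_nonneg _) hq k.succ_ne_zero
  simpa [eulerLogTerm, pow_mul] using
    (hasSum_nat_add_iff' 1).2 (Complex.hasSum_taylorSeries_neg_log hqk)

lemma tendsto_prod_inv_one_sub_pow (hq : ‖q‖ < 1) :
    Tendsto (fun K => ∏ i ∈ range K, (1 - q ^ (i + 1))⁻¹) atTop
      (𝓝 (Complex.exp (∑' x, eulerLogTerm q x))) := by
  have hlog := ((summable_eulerLogTerm hq).hasSum.prod_fiberwise
    (hasSum_eulerLogTerm_fiber hq)).tendsto_sum_nat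
  refine ((Complex.continuous_exp.tendsto _).comp hlog).congr fun K => ?_
  rw [Function.comp_apply, Complex.exp_sum]
  refine prod_congr rfl fun i _ => ?_
  have hne : 1 - q ^ (i + 1) ≠ 0 := fun h => by
    have := pow_lt_one₀ (norm_nonneg q) hq i.succ_ne_zero
    rw [← norm_pow, ← sub_eq_zero.1 h, norm_one] at this
    exact this.false
  rw [Complex.exp_neg, Complex.exp_log hne]

lemma summable_numPartitions_mul_pow {x : ℝ} (hx : 0 ≤ x) (hx1 : x < 1) :
    Summable fun n => (numPartitions n : ℝ) * x ^ n := by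
  have hnorm : ‖(x : ℂ)‖ < 1 := by simpa [abs_of_nonneg hx] using hx1
  obtain ⟨M, hM⟩ := (tendsto_prod_inv_one_sub_pow hnorm).norm.bddAbove_range
  refine summable_of_sum_range_le (c := M) (fun n => by positivity) fun K => ?_
  have heval := (hasAbsEval_mk_numPartitionsLE K
    (show ‖x‖ < 1 by simpa [abs_of_nonneg hx] using hx1)).hasSum
  simp only [PowerSeries.coeff_mk] at heval
  calc ∑ n ∈ range K, (numPartitions n : ℝ) * x ^ n
      = ∑ n ∈ range K, (numPartitionsLE K n : ℝ) * x ^ n :=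
        sum_congr rfl fun n hn => by rw [numPartitionsLE_eq_of_le (mem_range.1 hn).le]
    _ ≤ ∏ i ∈ range K, (1 - x ^ (i + 1))⁻¹ :=
        sum_le_hasSum _ (fun n _ => by positivity) heval
    _ ≤ ‖∏ i ∈ range K, (1 - (x : ℂ) ^ (i + 1))⁻¹‖ := by
        refine (le_abs_self _).trans_eq ?_
        rw [← Real.norm_eq_abs, ← Complex.norm_real]
        push_cast
        rfl
    _ ≤ M := hM ⟨K, rfl⟩

theorem hasSum_numPartitions_mul_pow (hq : ‖q‖ < 1) :
    HasSum (fun n => (numPartitions n : ℂ) * q ^ n) (Complex.exp (∑' x, eulerLogTerm q x)) := by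
  have hbound := summable_numPartitions_mul_pow (norm_nonneg q) hq
  have hsum : Summable fun n => (numPartitions n : ℂ) * q ^ n :=
    .of_norm (by simpa using hbound)
  rw [hsum.hasSum_iff]
  refine tendsto_nhds_unique (tendsto_tsum_of_dominated_convergence
    (f := fun K n => (numPartitionsLE K n : ℂ) * q ^ n) hbound (fun n => ?_) ?_)
    ((tendsto_prod_inv_one_sub_pow hq).congr fun K => ?_)
  · refine tendsto_const_nhds.congr' ?_
    filter_upwards [eventually_ge_atTop n] with K hK
    rw [numPartitionsLE_eq_of_le hK]
  · refine .of_forall fun K n => ?_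
    rw [norm_mul, norm_pow, Complex.norm_natCast]
    gcongr
    exact numPartitionsLE_le K n
  · simpa using (hasAbsEval_mk_numPartitionsLE K hq).hasSum.tsum_eq.symm

end GeneratingFunction

section EulerWeights

lemma pow_mul_exp_neg_mul_le {b x : ℝ} (hb : 0 < b) (hx : 0 ≤ x) (j : ℕ) :
    x ^ j * exp (-(b * x)) ≤ j.factorial * (2 / b) ^ j * exp (-(b * x / 2)) := by
  have hpow : (b * x / 2) ^ j ≤ j.factorial * exp (b * x / 2) := by
    have := Real.pow_div_factorial_le_exp (b * x / 2) (by positivity) j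
    rwa [div_le_iff₀' (by positivity)] at this
  calc x ^ j * exp (-(b * x)) = (2 / b) ^ j * (b * x / 2) ^ j * exp (-(b * x)) := by
        rw [← mul_pow]
        congr 2
        field_simp
    _ ≤ (2 / b) ^ j * (j.factorial * exp (b * x / 2)) * exp (-(b * x)) := by gcongr
    _ = j.factorial * (2 / b) ^ j * (exp (b * x / 2) * exp (-(b * x))) := by ring
    _ = j.factorial * (2 / b) ^ j * exp (-(b * x / 2)) := by
        rw [← Real.exp_add]
        ring_nf

lemma hasSum_exp_neg_succ_mul {t : ℝ} (ht : 0 < t) :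
    HasSum (fun k : ℕ => exp (-((k + 1) * t))) (exp t - 1)⁻¹ := by
  have hlt : exp (-t) < 1 := by simpa using ht
  convert! (hasSum_geometric_of_lt_one (exp_pos (-t)).le hlt).mul_left (exp (-t)) using 1
  · ext k
    rw [← Real.exp_nat_mul, ← Real.exp_add]
    ring_nf
  · rw [Real.exp_neg, ← mul_inv, mul_sub, mul_one, mul_inv_cancel₀ (exp_ne_zero t)]

lemma exp_neg_div_one_sub_exp_neg_sq (t : ℝ) :
    exp (-t) / (1 - exp (-t)) ^ 2 = 1 / (4 * sinh (t / 2) ^ 2) := by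
  set u := exp (t / 2) with hu
  have hexp : exp (-t) = u⁻¹ ^ 2 := by
    rw [hu, ← Real.exp_neg, ← Real.exp_nat_mul]
    push_cast
    ring_nf
  have hfactor : 1 - u⁻¹ ^ 2 = u⁻¹ * (u - u⁻¹) := by
    rw [mul_sub, inv_mul_cancel₀ (exp_ne_zero _), sq]
  rw [hexp, hfactor, mul_pow, div_mul_cancel_left₀ (by positivity), Real.sinh_eq, Real.exp_neg,
    div_pow]
  ring

lemma hasSum_succ_mul_exp_neg_succ_mul {t : ℝ} (ht : 0 < t) :
    HasSum (fun k : ℕ => (k + 1) * exp (-((k + 1) * t))) (1 / (4 * sinh (t / 2) ^ 2)) := by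
  have hlt : ‖exp (-t)‖ < 1 := by simpa using ht
  have hsum := hasSum_coe_mul_geometric_of_norm_lt_one hlt
  rw [← hasSum_nat_add_iff' 1, exp_neg_div_one_sub_exp_neg_sq, Finset.sum_range_one, Nat.cast_zero,
    zero_mul, sub_zero] at hsum
  refine hsum.congr_fun fun k => ?_
  rw [← Real.exp_nat_mul]
  push_cast
  ring_nf

lemma hasSum_of_hasSum_columns {α β : Type*} {f : α × β → ℝ} {g : β → ℝ} {a : ℝ} (hf : 0 ≤ f)
    (hcol : ∀ y, HasSum (fun x => f (x, y)) (g y)) (hg : HasSum g a) : HasSum f a := by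
  have hswap : Summable (f ∘ Prod.swap) :=
    (summable_prod_of_nonneg (f := f ∘ Prod.swap) fun x => hf _).2
      ⟨fun y => (hcol y).summable, by simpa [(hcol _).tsum_eq] using hg.summable⟩
  rw [← (Equiv.prodComm β α).hasSum_iff]
  exact hg.unique (hswap.hasSum.prod_fiberwise hcol) ▸ hswap.hasSum

lemma hasSum_one_div_succ_sq : HasSum (fun m : ℕ => 1 / ((m : ℝ) + 1) ^ 2) (π ^ 2 / 6) := by
  simpa using (hasSum_nat_add_iff' 1).2 hasSum_zeta_two

/-- The exponent `(k + 1) (m + 1)` of `q` in `eulerLogTerm q (k, m)`. -/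
def eulerFreq (x : ℕ × ℕ) : ℝ := (x.1 + 1) * (x.2 + 1)

/-- The value of `eulerLogTerm` at the real point `q = exp (-s)`. -/
noncomputable def eulerWeight (s : ℝ) (x : ℕ × ℕ) : ℝ := exp (-(s * eulerFreq x)) / (x.2 + 1)

lemma eulerFreq_pos (x : ℕ × ℕ) : 0 < eulerFreq x := by
  unfold eulerFreq
  positivity

lemma eulerWeight_nonneg (s : ℝ) (x : ℕ × ℕ) : 0 ≤ eulerWeight s x := by
  unfold eulerWeight
  positivity

variable {s : ℝ}

lemma hasSum_eulerWeight_column (hs : 0 < s) (m : ℕ) :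
    HasSum (fun k => eulerWeight s (k, m)) ((exp ((m + 1) * s) - 1)⁻¹ / (m + 1)) := by
  refine ((hasSum_exp_neg_succ_mul (t := (m + 1) * s) (by positivity)).div_const _).congr_fun
    fun k => ?_
  simp only [eulerWeight, eulerFreq]
  ring_nf

lemma inv_exp_sub_one_le {t : ℝ} (ht : 0 < t) : (exp t - 1)⁻¹ ≤ t⁻¹ :=
  inv_anti₀ ht (by linarith [Real.add_one_le_exp t])

lemma summable_eulerWeight_and_tsum_le (hs : 0 < s) :
    Summable (eulerWeight s) ∧ ∑' x, eulerWeight s x ≤ 2 / s := by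
  have hcol (m : ℕ) : (exp ((m + 1) * s) - 1)⁻¹ / (m + 1) ≤ s⁻¹ * (1 / ((m : ℝ) + 1) ^ 2) :=
    calc (exp ((m + 1) * s) - 1)⁻¹ / (m + 1) ≤ ((m + 1) * s)⁻¹ / (m + 1) := by
          gcongr ?_ / _
          exact inv_exp_sub_one_le (by positivity)
      _ = s⁻¹ * (1 / ((m : ℝ) + 1) ^ 2) := by field_simp
  have hzeta := hasSum_one_div_succ_sq.mul_left s⁻¹
  have hcols : Summable fun m : ℕ => (exp ((m + 1) * s) - 1)⁻¹ / ((m : ℝ) + 1) :=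
    hzeta.summable.of_nonneg_of_le
      (fun m => (hasSum_eulerWeight_column hs m).nonneg fun _ => eulerWeight_nonneg _ _) hcol
  have hsum := hasSum_of_hasSum_columns (eulerWeight_nonneg s) (hasSum_eulerWeight_column hs)
    hcols.hasSum
  refine ⟨hsum.summable, ?_⟩
  calc ∑' x, eulerWeight s x ≤ s⁻¹ * (π ^ 2 / 6) :=
        hsum.tsum_eq.trans_le (hasSum_le hcol hcols.hasSum hzeta)
    _ ≤ s⁻¹ * 2 := by
        gcongr
        nlinarith [Real.pi_pos, Real.pi_lt_d2]
    _ = 2 / s := by ring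

lemma summable_eulerWeight (hs : 0 < s) : Summable (eulerWeight s) :=
  (summable_eulerWeight_and_tsum_le hs).1

lemma eulerWeight_mul_pow_le (hs : 0 < s) (j : ℕ) (x : ℕ × ℕ) :
    eulerWeight s x * eulerFreq x ^ j ≤ j.factorial * (2 / s) ^ j * eulerWeight (s / 2) x := by
  have hbound := pow_mul_exp_neg_mul_le hs (eulerFreq_pos x).le j
  calc eulerWeight s x * eulerFreq x ^ j
      = eulerFreq x ^ j * exp (-(s * eulerFreq x)) / (x.2 + 1) := by rw [eulerWeight]; ring
    _ ≤ j.factorial * (2 / s) ^ j * exp (-(s * eulerFreq x / 2)) / (x.2 + 1) := by gcongr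
    _ = j.factorial * (2 / s) ^ j * eulerWeight (s / 2) x := by
        rw [eulerWeight, div_mul_eq_mul_div, mul_div_assoc]

lemma summable_eulerWeight_mul_pow (hs : 0 < s) (j : ℕ) :
    Summable fun x => eulerWeight s x * eulerFreq x ^ j :=
  ((summable_eulerWeight (half_pos hs)).mul_left _).of_nonneg_of_le
    (fun x => mul_nonneg (eulerWeight_nonneg s x) (pow_nonneg (eulerFreq_pos x).le j))
    (eulerWeight_mul_pow_le hs j)

lemma tsum_eulerWeight_mul_pow_le (hs : 0 < s) (j : ℕ) :
    ∑' x, eulerWeight s x * eulerFreq x ^ j ≤ j.factorial * (2 / s) ^ j * (4 / s) := by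
  obtain ⟨hsum, hle⟩ := summable_eulerWeight_and_tsum_le (half_pos hs)
  calc ∑' x, eulerWeight s x * eulerFreq x ^ j
      ≤ ∑' x, j.factorial * (2 / s) ^ j * eulerWeight (s / 2) x :=
        (summable_eulerWeight_mul_pow hs j).tsum_le_tsum (eulerWeight_mul_pow_le hs j)
          (hsum.mul_left _)
    _ = j.factorial * (2 / s) ^ j * ∑' x, eulerWeight (s / 2) x := tsum_mul_left
    _ ≤ j.factorial * (2 / s) ^ j * (2 / (s / 2)) := by gcongr
    _ = j.factorial * (2 / s) ^ j * (4 / s) := by ring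

end EulerWeights

section FirstMoment

lemma sinh_le_mul_cosh {t : ℝ} (ht : 0 ≤ t) : sinh t ≤ t * cosh t := by
  have hderiv (x : ℝ) : HasDerivAt (fun x => x * cosh x - sinh x) (x * sinh x) x := by
    convert! ((hasDerivAt_id x).mul (Real.hasDerivAt_cosh x)).sub (Real.hasDerivAt_sinh x) using 1
    simp only [id]
    ring
  have hmono : MonotoneOn (fun x : ℝ => x * cosh x - sinh x) (Set.Ici 0) :=
    monotoneOn_of_hasDerivWithinAt_nonneg (convex_Ici 0)
      (fun x _ => (hderiv x).continuousAt.continuousWithinAt)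
      (fun x _ => (hderiv x).hasDerivWithinAt) fun x hx => by
        rw [interior_Ici] at hx
        exact mul_nonneg hx.le (Real.sinh_nonneg_iff.2 hx.le)
  simpa using hmono Set.self_mem_Ici ht ht

lemma one_div_sq_sub_one_div_sinh_sq_le {t : ℝ} (ht : 0 < t) :
    1 / t ^ 2 - 1 / sinh t ^ 2 ≤ 4 / (1 + t) ^ 2 := by
  have : 0 < sinh t := Real.sinh_pos_iff.2 ht
  rcases le_total t 1 with h1 | h1
  · have hle : sinh t ^ 2 ≤ t ^ 2 * (1 + sinh t ^ 2) := by
      rw [add_comm 1, ← Real.cosh_sq, ← mul_pow]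
      gcongr
      exact sinh_le_mul_cosh ht.le
    calc 1 / t ^ 2 - 1 / sinh t ^ 2 ≤ 1 := by
          rw [sub_le_iff_le_add, div_le_iff₀ (by positivity)]
          rw [one_add_div (by positivity), div_mul_eq_mul_div, one_le_div (by positivity)]
          linarith
      _ ≤ 4 / (1 + t) ^ 2 := by
          rw [le_div_iff₀ (by positivity)]
          nlinarith
  · calc 1 / t ^ 2 - 1 / sinh t ^ 2 ≤ 1 / t ^ 2 := sub_le_self _ (by positivity)
      _ ≤ 4 / (1 + t) ^ 2 := by
          rw [div_le_div_iff₀ (by positivity) (by positivity)]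
          nlinarith

lemma summable_one_div_sq_and_tsum_le {h : ℝ} (hh : 0 < h) :
    (Summable fun m : ℕ => 1 / (1 + (m + 1) * h) ^ 2) ∧
      ∑' m : ℕ, 1 / (1 + (m + 1) * h) ^ 2 ≤ 1 / h := by
  have hterm (m : ℕ) : 1 / (1 + (m + 1) * h) ^ 2 ≤
      h⁻¹ * (1 / (1 + m * h) - 1 / (1 + (m + 1 : ℕ) * h)) := by
    push_cast
    rw [div_sub_div _ _ (by positivity) (by positivity), ← div_eq_inv_mul, div_div,
      div_le_div_iff₀ (by positivity) (by positivity)]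
    have : 0 ≤ (m : ℝ) * h := by positivity
    nlinarith [mul_pos hh hh, mul_nonneg (mul_nonneg this hh.le) hh.le, mul_nonneg this hh.le]
  have hpartial (N : ℕ) : ∑ m ∈ Finset.range N, 1 / (1 + (m + 1) * h) ^ 2 ≤ 1 / h := by
    refine (Finset.sum_le_sum fun m _ => hterm m).trans ?_
    rw [← Finset.mul_sum, Finset.sum_range_sub' fun m : ℕ => 1 / (1 + m * h), one_div h]
    refine mul_le_of_le_one_right (by positivity) ?_
    simp only [Nat.cast_zero, zero_mul, add_zero, div_one, sub_le_self_iff]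
    positivity
  exact ⟨summable_of_sum_range_le (fun _ => by positivity) hpartial,
    Real.tsum_le_of_sum_range_le (fun _ => by positivity) hpartial⟩

lemma hasSum_eulerWeight_mul_eulerFreq_column {s : ℝ} (hs : 0 < s) (m : ℕ) :
    HasSum (fun k => eulerWeight s (k, m) * eulerFreq (k, m))
      (1 / (4 * sinh ((m + 1) * (s / 2)) ^ 2)) := by
  rw [← mul_div_assoc]
  refine (hasSum_succ_mul_exp_neg_succ_mul (t := (m + 1) * s) (by positivity)).congr_fun
    fun k => ?_
  simp only [eulerWeight, eulerFreq]
  field_simp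

theorem abs_tsum_eulerWeight_mul_eulerFreq_sub_le {s : ℝ} (hs : 0 < s) :
    |∑' x, eulerWeight s x * eulerFreq x - π ^ 2 / 6 / s ^ 2| ≤ 2 / s := by
  set t : ℕ → ℝ := fun m => (m + 1) * (s / 2) with ht
  have htpos (m : ℕ) : 0 < t m := by positivity
  have hzeta : HasSum (fun m => 1 / (4 * t m ^ 2)) (π ^ 2 / 6 / s ^ 2) := by
    refine (hasSum_one_div_succ_sq.div_const (s ^ 2)).congr_fun fun m => ?_
    simp only [ht]
    field_simp
    norm_num
  have hle (m : ℕ) : 1 / (4 * sinh (t m) ^ 2) ≤ 1 / (4 * t m ^ 2) := by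
    gcongr
    exact Real.self_le_sinh_iff.2 (htpos m).le
  have hcols : Summable fun m => 1 / (4 * sinh (t m) ^ 2) :=
    hzeta.summable.of_nonneg_of_le (fun m => by positivity) hle
  have hmoment := hasSum_of_hasSum_columns
    (fun x => mul_nonneg (eulerWeight_nonneg s x) (eulerFreq_pos x).le)
    (hasSum_eulerWeight_mul_eulerFreq_column hs) hcols.hasSum
  have hdiff := hzeta.sub hcols.hasSum
  obtain ⟨hsummable, htsum⟩ := summable_one_div_sq_and_tsum_le (half_pos hs)
  have hterm (m : ℕ) : 1 / (4 * t m ^ 2) - 1 / (4 * sinh (t m) ^ 2) ≤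
      1 / (1 + (m + 1) * (s / 2)) ^ 2 := by
    have := one_div_sq_sub_one_div_sinh_sq_le (htpos m)
    calc 1 / (4 * t m ^ 2) - 1 / (4 * sinh (t m) ^ 2)
        = (1 / t m ^ 2 - 1 / sinh (t m) ^ 2) / 4 := by simp only [one_div, mul_inv]; ring
      _ ≤ 4 / (1 + t m) ^ 2 / 4 := by gcongr
      _ = 1 / (1 + (m + 1) * (s / 2)) ^ 2 := by rw [div_right_comm, div_self four_ne_zero]
  rw [hmoment.tsum_eq, abs_sub_comm,
    abs_of_nonneg (hdiff.nonneg fun m => sub_nonneg.2 (hle m))]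
  calc _ ≤ ∑' m : ℕ, 1 / (1 + (m + 1) * (s / 2)) ^ 2 := hasSum_le hterm hdiff hsummable.hasSum
    _ ≤ 1 / (s / 2) := htsum
    _ = 2 / s := by ring

end FirstMoment

section CompoundPoisson

variable {ι : Type*} {w ν : ι → ℝ}

/-- Minus the real part of the compound Poisson exponent `∑ᵢ wᵢ (exp (i νᵢ θ) - 1)`. -/
noncomputable def damping (w ν : ι → ℝ) (θ : ℝ) : ℝ := ∑' i, w i * (1 - cos (ν i * θ))

/-- The imaginary part of the compound Poisson exponent `∑ᵢ wᵢ (exp (i νᵢ θ) - 1)`. -/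
noncomputable def phase (w ν : ι → ℝ) (θ : ℝ) : ℝ := ∑' i, w i * sin (ν i * θ)

lemma norm_damping_term_le (θ : ℝ) (i : ι) : ‖w i * (1 - cos (ν i * θ))‖ ≤ 2 * ‖w i‖ := by
  rw [norm_mul, Real.norm_of_nonneg (sub_nonneg.2 (Real.cos_le_one _)), mul_comm]
  gcongr
  linarith [Real.neg_one_le_cos (ν i * θ)]

lemma norm_phase_term_le (θ : ℝ) (i : ι) : ‖w i * sin (ν i * θ)‖ ≤ ‖w i‖ := by
  rw [norm_mul]
  exact mul_le_of_le_one_right (norm_nonneg _) (Real.abs_sin_le_one _)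

lemma summable_damping_term (hw : Summable w) (θ : ℝ) :
    Summable fun i => w i * (1 - cos (ν i * θ)) :=
  .of_norm_bounded (hw.norm.mul_left 2) (norm_damping_term_le θ)

lemma summable_phase_term (hw : Summable w) (θ : ℝ) : Summable fun i => w i * sin (ν i * θ) :=
  .of_norm_bounded hw.norm (norm_phase_term_le θ)

lemma continuous_damping (hw : Summable w) : Continuous (damping w ν) :=
  continuous_tsum (fun i => by fun_prop) (hw.norm.mul_left 2) fun i θ => norm_damping_term_le θ i

lemma continuous_phase (hw : Summable w) : Continuous (phase w ν) :=
  continuous_tsum (fun i => by fun_prop) hw.norm fun i θ => norm_phase_term_le θ i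

lemma hasSum_mul_cexp (hw : Summable w) (θ : ℝ) :
    HasSum (fun i => (w i : ℂ) * Complex.exp (ν i * θ * Complex.I))
      ((∑' i, w i : ℝ) - damping w ν θ + phase w ν θ * Complex.I) := by
  have hreal := Complex.hasSum_ofReal.2 (hw.hasSum.sub
    (summable_damping_term (ν := ν) hw θ).hasSum)
  have himag := (Complex.hasSum_ofReal.2
    (summable_phase_term (ν := ν) hw θ).hasSum).mul_right Complex.I
  rw [Complex.ofReal_sub] at hreal
  refine (hreal.add himag).congr_fun fun i => ?_
  rw [← Complex.ofReal_mul, Complex.exp_mul_I]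
  push_cast
  ring

lemma damping_le (hw0 : ∀ i, 0 ≤ w i) (hw : Summable w) (hw2 : Summable fun i => w i * ν i ^ 2)
    (θ : ℝ) : damping w ν θ ≤ θ ^ 2 / 2 * ∑' i, w i * ν i ^ 2 := by
  rw [← tsum_mul_left]
  refine (summable_damping_term hw θ).tsum_le_tsum (fun i => ?_) (hw2.mul_left _)
  calc w i * (1 - cos (ν i * θ)) ≤ w i * ((ν i * θ) ^ 2 / 2) := by
        gcongr
        · exact hw0 i
        · linarith [Real.one_sub_sq_div_two_le_cos (x := ν i * θ)]
    _ = θ ^ 2 / 2 * (w i * ν i ^ 2) := by ring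

lemma abs_phase_sub_le (hw0 : ∀ i, 0 ≤ w i) (hν : ∀ i, 0 ≤ ν i) (hw : Summable w)
    (hw1 : Summable fun i => w i * ν i) (hw3 : Summable fun i => w i * ν i ^ 3) (θ : ℝ) :
    |phase w ν θ - (∑' i, w i * ν i) * θ| ≤ |θ| ^ 3 / 6 * ∑' i, w i * ν i ^ 3 := by
  rw [phase, ← tsum_mul_right, ← (summable_phase_term hw θ).tsum_sub (hw1.mul_right θ),
    ← tsum_mul_left]
  refine (Real.norm_eq_abs _).symm.trans_le <|
    tsum_of_norm_bounded (hw3.mul_left (|θ| ^ 3 / 6)).hasSum fun i => ?_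
  calc ‖w i * sin (ν i * θ) - w i * ν i * θ‖ = w i * |ν i * θ - sin (ν i * θ)| := by
        rw [mul_assoc, ← mul_sub, norm_mul, Real.norm_of_nonneg (hw0 i), Real.norm_eq_abs,
          abs_sub_comm]
    _ ≤ w i * (|ν i * θ| ^ 3 / 6) := by
        gcongr
        · exact hw0 i
        · exact Real.abs_sub_sin_le _
    _ = |θ| ^ 3 / 6 * (w i * ν i ^ 3) := by
        rw [abs_mul, abs_of_nonneg (hν i)]
        ring

end CompoundPoisson

section FourierCoefficients

open Complex MeasureTheory

lemma integral_cexp_mul_cexp_neg (k n : ℕ) :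
    ∫ θ in -π..π, cexp (k * θ * I) * cexp (-(n * θ * I)) = if k = n then 2 * (π : ℂ) else 0 := by
  have hcomb (θ : ℝ) : cexp (k * θ * I) * cexp (-(n * θ * I)) = cexp ((k - n : ℂ) * I * θ) := by
    rw [← Complex.exp_add]
    ring_nf
  simp_rw [hcomb]
  split_ifs with hkn
  · simp [hkn, two_mul]
  · have hne : (k - n : ℂ) * I ≠ 0 :=
      mul_ne_zero (sub_ne_zero.2 (Nat.cast_injective.ne hkn)) I_ne_zero
    have hperiodic : cexp ((k - n : ℂ) * I * π) = cexp ((k - n : ℂ) * I * (-π : ℝ)) := by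
      rw [Complex.exp_eq_exp_iff_exists_int]
      refine ⟨k - n, ?_⟩
      push_cast
      ring
    rw [integral_exp_mul_complex hne, hperiodic, sub_self, zero_div]

lemma integral_tsum_mul_cexp_mul_cexp_neg {a : ℕ → ℂ} (ha : Summable fun k => ‖a k‖) (n : ℕ) :
    ∫ θ in -π..π, (∑' k, a k * cexp (k * θ * I)) * cexp (-(n * θ * I)) = 2 * π * a n := by
  have hnorm (k : ℕ) (θ : ℝ) : ‖a k * cexp (k * θ * I)‖ = ‖a k‖ := by
    rw [norm_mul, ← ofReal_natCast, ← ofReal_mul, norm_exp_ofReal_mul_I, mul_one]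
  have hnorm_neg (θ : ℝ) : ‖cexp (-(n * θ * I))‖ = 1 := by
    rw [← ofReal_natCast, ← ofReal_mul, ← neg_mul, ← ofReal_neg, norm_exp_ofReal_mul_I]
  have hseries (θ : ℝ) :
      HasSum (fun k => a k * cexp (k * θ * I)) (∑' k, a k * cexp (k * θ * I)) :=
    (Summable.of_norm (ha.congr fun k => (hnorm k θ).symm)).hasSum
  have hsum := intervalIntegral.hasSum_integral_of_dominated_convergence (μ := volume)
    (a := -π) (b := π) (F := fun k θ => a k * cexp (k * θ * I) * cexp (-(n * θ * I)))
    (f := fun θ => (∑' k, a k * cexp (k * θ * I)) * cexp (-(n * θ * I))) (fun k _ => ‖a k‖)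
    (fun k => (by fun_prop : Continuous _).aestronglyMeasurable)
    (fun k => .of_forall fun θ _ => by rw [norm_mul, hnorm_neg, mul_one, hnorm])
    (.of_forall fun θ _ => ha) intervalIntegrable_const
    (.of_forall fun θ _ => (hseries θ).mul_right _)
  have hterm (k : ℕ) : ∫ θ in -π..π, a k * cexp (k * θ * I) * cexp (-(n * θ * I)) =
      if k = n then 2 * π * a n else 0 := by
    simp_rw [mul_assoc (a k)]
    rw [intervalIntegral.integral_const_mul, integral_cexp_mul_cexp_neg]
    split_ifs with hkn
    · rw [hkn, mul_comm]
    · rw [mul_zero]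
  simp_rw [hterm] at hsum
  exact hsum.unique (hasSum_ite_eq n _)

lemma eulerLogTerm_cexp (s θ : ℝ) (x : ℕ × ℕ) :
    eulerLogTerm (cexp (-s + θ * I)) x = eulerWeight s x * cexp (eulerFreq x * θ * I) := by
  rw [eulerLogTerm, eulerWeight, eulerFreq, ← Complex.exp_nat_mul]
  push_cast
  rw [div_mul_eq_mul_div, ← Complex.exp_add]
  ring_nf

lemma tsum_numPartitions_mul_cexp {s : ℝ} (hs : 0 < s) (θ : ℝ) :
    ∑' n : ℕ, (numPartitions n * rexp (-(n * s)) : ℝ) * cexp (n * θ * I) =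
      rexp (∑' x, eulerWeight s x) *
        cexp (-damping (eulerWeight s) eulerFreq θ + phase (eulerWeight s) eulerFreq θ * I) := by
  have hq : ‖cexp (-s + θ * I)‖ < 1 := by simpa [Complex.norm_exp] using hs
  have hexponent := hasSum_mul_cexp (ν := eulerFreq) (summable_eulerWeight hs) θ
  calc ∑' n : ℕ, (numPartitions n * rexp (-(n * s)) : ℝ) * cexp (n * θ * I)
      = ∑' n : ℕ, numPartitions n * cexp (-s + θ * I) ^ n := by
        refine tsum_congr fun n => ?_
        rw [← Complex.exp_nat_mul]
        push_cast
        rw [mul_assoc, ← Complex.exp_add]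
        ring_nf
    _ = cexp (∑' x, eulerLogTerm (cexp (-s + θ * I)) x) := (hasSum_numPartitions_mul_pow hq).tsum_eq
    _ = _ := by
        rw [tsum_congr (eulerLogTerm_cexp s θ), hexponent.tsum_eq, ofReal_exp, ← Complex.exp_add]
        ring_nf

lemma re_integral_cexp {u v : ℝ → ℝ} (hu : Continuous u) (hv : Continuous v) (a b : ℝ) :
    (∫ θ in a..b, cexp (u θ + v θ * I)).re = ∫ θ in a..b, rexp (u θ) * Real.cos (v θ) := by
  have hint : IntervalIntegrable (fun θ => cexp (u θ + v θ * I)) volume a b :=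
    (by fun_prop : Continuous _).intervalIntegrable a b
  rw [← reCLM_apply, ← reCLM.intervalIntegral_comp_comm hint]
  simp [Complex.exp_re]

theorem integral_exp_neg_damping_mul_cos {s : ℝ} (hs : 0 < s) (n : ℕ) :
    ∫ θ in -π..π, rexp (-damping (eulerWeight s) eulerFreq θ) *
        Real.cos (phase (eulerWeight s) eulerFreq θ - n * θ) =
      2 * π * (numPartitions n * rexp (-(n * s))) * rexp (-∑' x, eulerWeight s x) := by
  have hgen := tsum_numPartitions_mul_cexp hs
  set D := damping (eulerWeight s) eulerFreq
  set A := phase (eulerWeight s) eulerFreq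
  have hD : Continuous D := continuous_damping (summable_eulerWeight hs)
  have hA : Continuous A := continuous_phase (summable_eulerWeight hs)
  have hcoeff : Summable fun k : ℕ => ‖((numPartitions k * rexp (-(k * s)) : ℝ) : ℂ)‖ := by
    refine (summable_numPartitions_mul_pow (exp_pos (-s)).le (by simpa using hs)).congr fun k => ?_
    rw [Complex.norm_real, Real.norm_of_nonneg (by positivity), ← Real.exp_nat_mul, mul_neg]
  have hcomb (θ : ℝ) : rexp (∑' x, eulerWeight s x) * cexp (-D θ + A θ * I) * cexp (-(n * θ * I)) =
      rexp (∑' x, eulerWeight s x) * cexp ((-D θ : ℝ) + (A θ - n * θ : ℝ) * I) := by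
    rw [mul_assoc, ← Complex.exp_add]
    push_cast
    ring_nf
  have hfourier := congrArg re (integral_tsum_mul_cexp_mul_cexp_neg hcoeff n)
  simp_rw [hgen, hcomb] at hfourier
  rw [intervalIntegral.integral_const_mul, re_ofReal_mul,
    re_integral_cexp (u := fun θ => -D θ) hD.neg (by fun_prop)] at hfourier
  rw [Real.exp_neg (∑' x, eulerWeight s x), ← div_eq_mul_inv, eq_div_iff (Real.exp_ne_zero _),
    mul_comm, hfourier]
  norm_cast

end FourierCoefficients

section EulerDamping

open MeasureTheory

lemma damping_eulerWeight_le {s : ℝ} (hs : 0 < s) (θ : ℝ) :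
    damping (eulerWeight s) eulerFreq θ ≤ 16 * θ ^ 2 / s ^ 3 := by
  calc damping (eulerWeight s) eulerFreq θ
      ≤ θ ^ 2 / 2 * ∑' x, eulerWeight s x * eulerFreq x ^ 2 :=
        damping_le (eulerWeight_nonneg s) (summable_eulerWeight hs)
          (summable_eulerWeight_mul_pow hs 2) θ
    _ ≤ θ ^ 2 / 2 * ((2).factorial * (2 / s) ^ 2 * (4 / s)) := by
        gcongr
        exact tsum_eulerWeight_mul_pow_le hs 2
    _ = 16 * θ ^ 2 / s ^ 3 := by
        norm_num [Nat.factorial]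
        field_simp
        ring

lemma abs_phase_eulerWeight_sub_le {s : ℝ} (hs : 0 < s) (θ : ℝ) :
    |phase (eulerWeight s) eulerFreq θ - π ^ 2 / 6 / s ^ 2 * θ| ≤
      2 / s * |θ| + 32 / s ^ 4 * |θ| ^ 3 := by
  have hcubic : |phase (eulerWeight s) eulerFreq θ - (∑' x, eulerWeight s x * eulerFreq x) * θ| ≤
      |θ| ^ 3 / 6 * ∑' x, eulerWeight s x * eulerFreq x ^ 3 :=
    abs_phase_sub_le (eulerWeight_nonneg s) (fun x => (eulerFreq_pos x).le)
      (summable_eulerWeight hs) (by simpa using summable_eulerWeight_mul_pow hs 1)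
      (summable_eulerWeight_mul_pow hs 3) θ
  have hthird : |θ| ^ 3 / 6 * ∑' x, eulerWeight s x * eulerFreq x ^ 3 ≤ 32 / s ^ 4 * |θ| ^ 3 := by
    calc |θ| ^ 3 / 6 * ∑' x, eulerWeight s x * eulerFreq x ^ 3
        ≤ |θ| ^ 3 / 6 * ((3).factorial * (2 / s) ^ 3 * (4 / s)) := by
          gcongr
          exact tsum_eulerWeight_mul_pow_le hs 3
      _ = 32 / s ^ 4 * |θ| ^ 3 := by
          norm_num [Nat.factorial]
          field_simp
          ring
  have hmean : |(∑' x, eulerWeight s x * eulerFreq x) * θ - π ^ 2 / 6 / s ^ 2 * θ| ≤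
      2 / s * |θ| := by
    rw [← sub_mul, abs_mul]
    gcongr
    exact abs_tsum_eulerWeight_mul_eulerFreq_sub_le hs
  linarith [abs_sub_le (phase (eulerWeight s) eulerFreq θ)
    ((∑' x, eulerWeight s x * eulerFreq x) * θ) (π ^ 2 / 6 / s ^ 2 * θ)]

lemma hasSum_pow_succ_mul_cos {a : ℝ} (ha0 : 0 ≤ a) (ha1 : a < 1) (θ : ℝ) :
    HasSum (fun k : ℕ => a ^ (k + 1) * cos ((k + 1) * θ))
      ((a * cos θ - a ^ 2) / ((1 - a) ^ 2 + 2 * a * (1 - cos θ))) := by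
  set q : ℂ := a * Complex.exp (θ * Complex.I) with hq
  have hnorm : ‖q‖ < 1 := by simpa [hq, abs_of_nonneg ha0]
  have hre : q.re = a * cos θ := by
    rw [hq, Complex.re_ofReal_mul, Complex.exp_ofReal_mul_I_re]
  have him : q.im = a * sin θ := by
    rw [hq, Complex.im_ofReal_mul, Complex.exp_ofReal_mul_I_im]
  have hnormSq : Complex.normSq (1 - q) = (1 - a) ^ 2 + 2 * a * (1 - cos θ) := by
    rw [Complex.normSq_apply, Complex.sub_re, Complex.sub_im, hre, him, Complex.one_re,
      Complex.one_im]
    linear_combination a ^ 2 * sin_sq_add_cos_sq θ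
  have hsum := Complex.hasSum_re ((hasSum_geometric_of_norm_lt_one hnorm).mul_left q)
  have hvalue : (q * (1 - q)⁻¹).re =
      (a * cos θ - a ^ 2) / ((1 - a) ^ 2 + 2 * a * (1 - cos θ)) := by
    rw [Complex.mul_re, Complex.inv_re, Complex.inv_im, hnormSq, Complex.sub_re, Complex.sub_im,
      hre, him, Complex.one_re, Complex.one_im, mul_div_assoc', mul_div_assoc', ← sub_div]
    congr 1
    linear_combination -a ^ 2 * sin_sq_add_cos_sq θ
  rw [hvalue] at hsum
  refine hsum.congr_fun fun k => ?_
  rw [← pow_succ', hq, mul_pow, ← Complex.exp_nat_mul, ← Complex.ofReal_pow,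
    Complex.re_ofReal_mul, ← mul_assoc, ← Complex.exp_ofReal_mul_I_re]
  push_cast
  rfl

lemma hasSum_pow_succ_mul_one_sub_cos {a : ℝ} (ha0 : 0 < a) (ha1 : a < 1) (θ : ℝ) :
    HasSum (fun k : ℕ => a ^ (k + 1) * (1 - cos ((k + 1) * θ)))
      (a * (1 + a) * (1 - cos θ) / ((1 - a) * ((1 - a) ^ 2 + 2 * a * (1 - cos θ)))) := by
  have h1a : 0 < 1 - a := sub_pos.2 ha1
  have hcos : 0 ≤ 1 - cos θ := sub_nonneg.2 (cos_le_one θ)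
  have hden : 0 < (1 - a) ^ 2 + 2 * a * (1 - cos θ) := by positivity
  have hgeom : HasSum (fun k : ℕ => a ^ (k + 1)) (a / (1 - a)) := by
    simpa only [pow_succ', div_eq_mul_inv] using
      (hasSum_geometric_of_lt_one ha0.le ha1).mul_left a
  have hsum := hgeom.sub (hasSum_pow_succ_mul_cos ha0.le ha1 θ)
  rw [div_sub_div _ _ h1a.ne' hden.ne'] at hsum
  convert! hsum using 1
  · ext k
    ring
  · congr 1
    ring

lemma sq_div_five_le_one_sub_cos {θ : ℝ} (hθ : |θ| ≤ π) : θ ^ 2 / 5 ≤ 1 - cos θ := by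
  have hπ : 1 / 5 ≤ 2 / π ^ 2 := by
    rw [div_le_div_iff₀ (by norm_num) (by positivity)]
    nlinarith [pi_gt_three, pi_lt_d2]
  nlinarith [sq_nonneg θ, cos_le_one_sub_mul_cos_sq hθ]

lemma sq_div_le_damping_eulerWeight {s θ : ℝ} (hs : 0 < s) (hs2 : s ≤ 1 / 2) (hθ : |θ| ≤ π) :
    θ ^ 2 / (10 * s * (s ^ 2 + θ ^ 2)) ≤ damping (eulerWeight s) eulerFreq θ := by
  have hsa : 1 - s ≤ exp (-s) := by linarith [add_one_le_exp (-s)]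
  have ha1 : exp (-s) < 1 := by simpa using hs
  have hrow := hasSum_pow_succ_mul_one_sub_cos (exp_pos (-s)) ha1 θ
  have hrow_le : ∑' k : ℕ, exp (-s) ^ (k + 1) * (1 - cos ((k + 1) * θ)) ≤
      damping (eulerWeight s) eulerFreq θ := by
    refine hrow.summable.tsum_le_tsum_of_inj (fun k => (k, 0))
      (fun a b h => (Prod.mk.inj h).1)
      (fun x _ => mul_nonneg (eulerWeight_nonneg s x) (sub_nonneg.2 (cos_le_one _)))
      (fun k => le_of_eq ?_) (summable_damping_term (summable_eulerWeight hs) θ)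
    simp [eulerWeight, eulerFreq, ← exp_nat_mul, mul_comm]
  rw [hrow.tsum_eq] at hrow_le
  refine le_trans ?_ hrow_le
  have hcos := sq_div_five_le_one_sub_cos hθ
  set a := exp (-s)
  set c := 1 - cos θ
  have : 0 < 1 - a := sub_pos.2 ha1
  have : 1 / 2 ≤ a := by linarith
  have hc : 0 ≤ c := (by positivity : 0 ≤ θ ^ 2 / 5).trans hcos
  calc θ ^ 2 / (10 * s * (s ^ 2 + θ ^ 2)) ≤ 3 / 4 * c / (s * (s ^ 2 + 2 * c)) := by
        rw [div_le_div_iff₀ (by positivity) (by positivity)]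
        have : θ ^ 2 * (s ^ 2 + 2 * c) ≤ 3 / 4 * c * (10 * (s ^ 2 + θ ^ 2)) := by
          nlinarith [mul_nonneg (sq_nonneg θ) hc, mul_nonneg (sq_nonneg s) (sub_nonneg.2 hcos),
            mul_nonneg (sq_nonneg s) hc]
        nlinarith
    _ ≤ a * (1 + a) * c / ((1 - a) * ((1 - a) ^ 2 + 2 * a * c)) := by
        gcongr <;> nlinarith

lemma exp_neg_damping_eulerWeight_le {s θ : ℝ} (hs : 0 < s) (hs2 : s ≤ 1 / 2) (hθ : |θ| ≤ π) :
    exp (-damping (eulerWeight s) eulerFreq θ) ≤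
      exp (-(1 / (20 * s ^ 3) * θ ^ 2)) + exp (-(1 / (20 * s))) := by
  have hlower := sq_div_le_damping_eulerWeight hs hs2 hθ
  rcases le_or_gt (θ ^ 2) (s ^ 2) with hsmall | hlarge
  · have : 1 / (20 * s ^ 3) * θ ^ 2 ≤ θ ^ 2 / (10 * s * (s ^ 2 + θ ^ 2)) := by
      rw [div_mul_eq_mul_div, one_mul]
      apply div_le_div_of_nonneg_left (sq_nonneg θ) (by positivity)
      nlinarith
    exact (exp_le_exp.2 (neg_le_neg (this.trans hlower))).trans
      (le_add_of_nonneg_right (exp_pos _).le)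
  · have : 1 / (20 * s) ≤ θ ^ 2 / (10 * s * (s ^ 2 + θ ^ 2)) := by
      rw [div_le_div_iff₀ (by positivity) (by positivity)]
      nlinarith
    exact (exp_le_exp.2 (neg_le_neg (this.trans hlower))).trans
      (le_add_of_nonneg_left (exp_pos _).le)

lemma exp_neg_one_div_le {t : ℝ} (ht : 0 < t) (k : ℕ) : exp (-(1 / t)) ≤ k.factorial * t ^ k := by
  have hpow := pow_div_factorial_le_exp (1 / t) (by positivity) k
  rw [exp_neg, inv_le_comm₀ (exp_pos _) (by positivity)]
  refine le_trans (le_of_eq ?_) hpow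
  rw [one_div_pow]
  field_simp

lemma intervalIntegral_exp_neg_mul_sq_le {b R : ℝ} (hb : 0 < b) (hR : 0 ≤ R) :
    ∫ θ in -R..R, exp (-b * θ ^ 2) ≤ √(π / b) := by
  rw [intervalIntegral.integral_of_le (by linarith), ← integral_gaussian]
  exact setIntegral_le_integral (integrable_exp_neg_mul_sq hb) (.of_forall fun θ => (exp_pos _).le)

lemma pow_mul_exp_neg_damping_eulerWeight_le {s θ : ℝ} (hs : 0 < s) (hs2 : s ≤ 1 / 2)
    (hθ : |θ| ≤ π) (i : ℕ) :
    (θ ^ 2) ^ i * exp (-damping (eulerWeight s) eulerFreq θ) ≤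
      i.factorial * (40 * s ^ 3) ^ i * exp (-(1 / (40 * s ^ 3)) * θ ^ 2) +
        (π ^ 2) ^ i * ((3 * i + 2).factorial * (20 * s) ^ (3 * i + 2)) := by
  have hcentre : (θ ^ 2) ^ i * exp (-(1 / (20 * s ^ 3) * θ ^ 2)) ≤
      i.factorial * (40 * s ^ 3) ^ i * exp (-(1 / (40 * s ^ 3)) * θ ^ 2) := by
    convert pow_mul_exp_neg_mul_le (b := 1 / (20 * s ^ 3)) (by positivity) (sq_nonneg θ) i using 3
    · field_simp
      ring
    · field_simp
      ring
  have htail := exp_neg_one_div_le (show 0 < 20 * s by positivity) (3 * i + 2)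
  have hsq : θ ^ 2 ≤ π ^ 2 := sq_le_sq' (abs_le.1 hθ).1 (abs_le.1 hθ).2
  calc (θ ^ 2) ^ i * exp (-damping (eulerWeight s) eulerFreq θ)
      ≤ (θ ^ 2) ^ i * (exp (-(1 / (20 * s ^ 3) * θ ^ 2)) + exp (-(1 / (20 * s)))) := by
        gcongr
        exact exp_neg_damping_eulerWeight_le hs hs2 hθ
    _ = (θ ^ 2) ^ i * exp (-(1 / (20 * s ^ 3) * θ ^ 2)) +
          (θ ^ 2) ^ i * exp (-(1 / (20 * s))) := mul_add _ _ _
    _ ≤ _ := by gcongr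

lemma exists_integral_pow_mul_exp_neg_damping_le (i : ℕ) : ∃ K > 0, ∀ s : ℝ, 0 < s → s ≤ 1 / 2 →
    ∫ θ in -π..π, (θ ^ 2) ^ i * exp (-damping (eulerWeight s) eulerFreq θ) ≤
      K * (s ^ 3) ^ i * (s * √s) := by
  refine ⟨i.factorial * 40 ^ i * √(40 * π) +
    2 * π * (π ^ 2) ^ i * ((3 * i + 2).factorial * 20 ^ (3 * i + 2)), by positivity, ?_⟩
  intro s hs hs2
  have hD : Continuous (damping (eulerWeight s) eulerFreq) :=
    continuous_damping (summable_eulerWeight hs)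
  have hgauss : ∫ θ in -π..π, exp (-(1 / (40 * s ^ 3)) * θ ^ 2) ≤ √(40 * π) * (s * √s) := by
    refine (intervalIntegral_exp_neg_mul_sq_le (by positivity) pi_pos.le).trans_eq ?_
    rw [show π / (1 / (40 * s ^ 3)) = 40 * π * (s ^ 2 * s) by field_simp,
      sqrt_mul (by positivity) (s ^ 2 * s), sqrt_mul (by positivity) s, sqrt_sq hs.le]
  have hs_sqrt : s ≤ √s := le_sqrt_of_sq_le (by nlinarith)
  calc ∫ θ in -π..π, (θ ^ 2) ^ i * exp (-damping (eulerWeight s) eulerFreq θ)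
      ≤ ∫ θ in -π..π, (i.factorial * (40 * s ^ 3) ^ i * exp (-(1 / (40 * s ^ 3)) * θ ^ 2) +
          (π ^ 2) ^ i * ((3 * i + 2).factorial * (20 * s) ^ (3 * i + 2))) :=
        intervalIntegral.integral_mono_on (by linarith [pi_pos])
          (Continuous.intervalIntegrable (by fun_prop) _ _)
          (Continuous.intervalIntegrable (by fun_prop) _ _)
          fun θ hθ => pow_mul_exp_neg_damping_eulerWeight_le hs hs2 (abs_le.2 hθ) i
    _ = i.factorial * (40 * s ^ 3) ^ i * (∫ θ in -π..π, exp (-(1 / (40 * s ^ 3)) * θ ^ 2)) +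
          2 * π * ((π ^ 2) ^ i * ((3 * i + 2).factorial * (20 * s) ^ (3 * i + 2))) := by
        rw [intervalIntegral.integral_add (Continuous.intervalIntegrable (by fun_prop) _ _)
          intervalIntegrable_const, intervalIntegral.integral_const_mul,
          intervalIntegral.integral_const, smul_eq_mul]
        ring
    _ ≤ i.factorial * (40 * s ^ 3) ^ i * (√(40 * π) * (s * √s)) +
          2 * π * ((π ^ 2) ^ i * ((3 * i + 2).factorial *
            (20 ^ (3 * i + 2) * ((s ^ 3) ^ i * (s * √s))))) := by
        rw [mul_pow 20 s, pow_add s, pow_mul s, sq s]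
        gcongr
    _ = _ := by
        rw [mul_pow]
        ring

lemma le_integral_exp_neg_damping {s : ℝ} (hs : 0 < s) (hs1 : s ≤ 1) :
    2 * exp (-16) * (s * √s) ≤ ∫ θ in -π..π, exp (-damping (eulerWeight s) eulerFreq θ) := by
  have hD : Continuous fun θ => exp (-damping (eulerWeight s) eulerFreq θ) :=
    (continuous_damping (summable_eulerWeight hs)).neg.rexp
  have hsqrt : √s ^ 2 = s := sq_sqrt hs.le
  have hsqrt1 : √s ≤ 1 := sqrt_le_one.2 hs1
  have hδ : s * √s ≤ π := by nlinarith [pi_gt_three, sqrt_nonneg s]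
  have hδ0 : 0 ≤ s * √s := by positivity
  calc 2 * exp (-16) * (s * √s) = ∫ _ in -(s * √s)..s * √s, exp (-16) := by
        rw [intervalIntegral.integral_const, smul_eq_mul]
        ring
    _ ≤ ∫ θ in -(s * √s)..s * √s, exp (-damping (eulerWeight s) eulerFreq θ) := by
        refine intervalIntegral.integral_mono_on (by linarith) intervalIntegrable_const
          (hD.intervalIntegrable _ _) fun θ hθ => exp_le_exp.2 (neg_le_neg ?_)
        refine (damping_eulerWeight_le hs θ).trans ?_
        rw [div_le_iff₀ (by positivity)]
        have hsq : θ ^ 2 ≤ (s * √s) ^ 2 := sq_le_sq' hθ.1 hθ.2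
        rw [mul_pow, hsqrt] at hsq
        linarith
    _ ≤ ∫ θ in -π..π, exp (-damping (eulerWeight s) eulerFreq θ) :=
        intervalIntegral.integral_mono_interval (by linarith) (by linarith) hδ
          (.of_forall fun θ => (exp_pos _).le) (hD.intervalIntegrable _ _)

end EulerDamping

section SaddlePoint

open MeasureTheory

lemma one_sub_sub_le_cos {a b θ y : ℝ} (hy : |y| ≤ a * |θ| + b * |θ| ^ 3) :
    1 - a ^ 2 * (θ ^ 2) ^ 1 - b ^ 2 * (θ ^ 2) ^ 3 ≤ cos y := by
  have hsq : y ^ 2 ≤ (a * |θ| + b * |θ| ^ 3) ^ 2 := by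
    rw [← sq_abs]
    exact pow_le_pow_left₀ (abs_nonneg y) hy 2
  rw [← sq_abs θ]
  nlinarith [sq_nonneg (a * |θ| - b * |θ| ^ 3), one_sub_sq_div_two_le_cos (x := y)]

lemma abs_cos_sub_sub_cos_le {a b θ y : ℝ} (hy : |y| ≤ a * |θ| + b * |θ| ^ 3) :
    |cos (y - θ) - cos y| ≤ (1 / 2 + a) * (θ ^ 2) ^ 1 + b * (θ ^ 2) ^ 2 := by
  have hcos : |cos y * (1 - cos θ)| ≤ θ ^ 2 / 2 := by
    rw [abs_mul, abs_of_nonneg (sub_nonneg.2 (cos_le_one θ))]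
    exact (mul_le_of_le_one_left (sub_nonneg.2 (cos_le_one θ)) (abs_cos_le_one y)).trans
      (by linarith [one_sub_sq_div_two_le_cos (x := θ)])
  have hsin : |sin y * sin θ| ≤ (a * |θ| + b * |θ| ^ 3) * |θ| := by
    rw [abs_mul]
    exact mul_le_mul (abs_sin_le_abs.trans hy) abs_sin_le_abs (abs_nonneg _)
      ((abs_nonneg y).trans hy)
  calc |cos (y - θ) - cos y| = |sin y * sin θ - cos y * (1 - cos θ)| := by
        rw [cos_sub]
        ring_nf
    _ ≤ |sin y * sin θ| + |cos y * (1 - cos θ)| := abs_sub _ _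
    _ ≤ (a * |θ| + b * |θ| ^ 3) * |θ| + |θ| ^ 2 / 2 := by
        rw [sq_abs]
        exact add_le_add hsin hcos
    _ = (1 / 2 + a) * (θ ^ 2) ^ 1 + b * (θ ^ 2) ^ 2 := by
        rw [← sq_abs θ]
        ring

section IntegralComparison

variable {E ψ : ℝ → ℝ} {a b c d : ℝ}

lemma le_integral_mul_cos (hE : Continuous E) (hE0 : 0 ≤ E) (hψ : Continuous ψ) (hcd : c ≤ d)
    (hbound : ∀ θ, |ψ θ| ≤ a * |θ| + b * |θ| ^ 3) :
    (∫ θ in c..d, E θ) - a ^ 2 * (∫ θ in c..d, (θ ^ 2) ^ 1 * E θ) -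
        b ^ 2 * (∫ θ in c..d, (θ ^ 2) ^ 3 * E θ) ≤
      ∫ θ in c..d, E θ * cos (ψ θ) := by
  rw [← intervalIntegral.integral_const_mul, ← intervalIntegral.integral_const_mul,
    ← intervalIntegral.integral_sub (Continuous.intervalIntegrable (by fun_prop) _ _)
      (Continuous.intervalIntegrable (by fun_prop) _ _),
    ← intervalIntegral.integral_sub (Continuous.intervalIntegrable (by fun_prop) _ _)
      (Continuous.intervalIntegrable (by fun_prop) _ _)]
  refine intervalIntegral.integral_mono_on hcd (Continuous.intervalIntegrable (by fun_prop) _ _)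
    (Continuous.intervalIntegrable (by fun_prop) _ _) fun θ _ => ?_
  linarith [mul_le_mul_of_nonneg_left (one_sub_sub_le_cos (hbound θ)) (hE0 θ)]

lemma abs_integral_mul_cos_sub_sub_le (hE : Continuous E) (hE0 : 0 ≤ E) (hψ : Continuous ψ)
    (hcd : c ≤ d) (hbound : ∀ θ, |ψ θ| ≤ a * |θ| + b * |θ| ^ 3) :
    |(∫ θ in c..d, E θ * cos (ψ θ - θ)) - ∫ θ in c..d, E θ * cos (ψ θ)| ≤
      (1 / 2 + a) * (∫ θ in c..d, (θ ^ 2) ^ 1 * E θ) + b * ∫ θ in c..d, (θ ^ 2) ^ 2 * E θ := by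
  have hshifted : IntervalIntegrable (fun θ => E θ * cos (ψ θ - θ)) volume c d :=
    Continuous.intervalIntegrable (by fun_prop) _ _
  have hcentred : IntervalIntegrable (fun θ => E θ * cos (ψ θ)) volume c d :=
    Continuous.intervalIntegrable (by fun_prop) _ _
  rw [← intervalIntegral.integral_const_mul, ← intervalIntegral.integral_const_mul,
    ← intervalIntegral.integral_sub hshifted hcentred,
    ← intervalIntegral.integral_add (Continuous.intervalIntegrable (by fun_prop) _ _)
      (Continuous.intervalIntegrable (by fun_prop) _ _)]
  rw [← norm_eq_abs]
  refine intervalIntegral.norm_integral_le_of_norm_le hcd (.of_forall fun θ _ => ?_) ?_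
  · rw [← mul_sub, norm_mul, norm_of_nonneg (hE0 θ), norm_eq_abs]
    linarith [mul_le_mul_of_nonneg_left (abs_cos_sub_sub_cos_le (hbound θ)) (hE0 θ)]
  · exact Continuous.intervalIntegrable (by fun_prop) _ _

end IntegralComparison

/-- Up to the factor `2π`, the probability of `n` under the tilted partition measure
`n ↦ p(n) exp (-n s) / ∑ₖ p(k) exp (-k s)`, written as a Fourier integral. -/
noncomputable def tiltedMass (s : ℝ) (n : ℕ) : ℝ :=
  ∫ θ in -π..π, exp (-damping (eulerWeight s) eulerFreq θ) *
    cos (phase (eulerWeight s) eulerFreq θ - n * θ)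

variable {s : ℝ}

lemma continuous_exp_neg_damping_eulerWeight (hs : 0 < s) :
    Continuous fun θ => exp (-damping (eulerWeight s) eulerFreq θ) :=
  (continuous_damping (summable_eulerWeight hs)).neg.rexp

lemma continuous_phase_eulerWeight_sub (hs : 0 < s) (n : ℕ) :
    Continuous fun θ => phase (eulerWeight s) eulerFreq θ - n * θ :=
  (continuous_phase (summable_eulerWeight hs)).sub (continuous_const_mul _)

lemma exists_le_tiltedMass : ∃ s₀ > 0, ∀ (s : ℝ) (n : ℕ), 0 < s → s ≤ s₀ →
    π ^ 2 / 6 / s ^ 2 = n → exp (-16) * (s * √s) ≤ tiltedMass s n := by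
  obtain ⟨K₁, hK₁, hmoment₁⟩ := exists_integral_pow_mul_exp_neg_damping_le 1
  obtain ⟨K₃, hK₃, hmoment₃⟩ := exists_integral_pow_mul_exp_neg_damping_le 3
  refine ⟨min (1 / 2) (exp (-16) / (4 * K₁ + 1024 * K₃)), by positivity,
    fun s n hs hs₀ hn => ?_⟩
  have hs2 : s ≤ 1 / 2 := hs₀.trans (min_le_left _ _)
  have hsmall : s * (4 * K₁ + 1024 * K₃) ≤ exp (-16) :=
    (le_div_iff₀ (by positivity)).1 (hs₀.trans (min_le_right _ _))
  have hcompare := le_integral_mul_cos (continuous_exp_neg_damping_eulerWeight hs)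
    (fun θ => (exp_pos _).le) (continuous_phase_eulerWeight_sub hs n) (neg_le_self pi_pos.le)
    (hn ▸ abs_phase_eulerWeight_sub_le hs)
  have hquadratic := mul_le_mul_of_nonneg_left (hmoment₁ s hs hs2) (sq_nonneg (2 / s))
  have hsextic := mul_le_mul_of_nonneg_left (hmoment₃ s hs hs2) (sq_nonneg (32 / s ^ 4))
  have herror : (2 / s) ^ 2 * (K₁ * (s ^ 3) ^ 1 * (s * √s)) +
      (32 / s ^ 4) ^ 2 * (K₃ * (s ^ 3) ^ 3 * (s * √s)) =
      s * (4 * K₁ + 1024 * K₃) * (s * √s) := by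
    field_simp
    ring
  have habsorb := mul_le_mul_of_nonneg_right hsmall (show 0 ≤ s * √s by positivity)
  have hmain := le_integral_exp_neg_damping hs (by linarith)
  unfold tiltedMass
  linarith

lemma exists_abs_tiltedMass_succ_sub_le : ∃ K > 0, ∀ (s : ℝ) (n : ℕ), 0 < s → s ≤ 1 / 2 →
    π ^ 2 / 6 / s ^ 2 = n → |tiltedMass s (n + 1) - tiltedMass s n| ≤ K * s ^ 2 * (s * √s) := by
  obtain ⟨K₁, hK₁, hmoment₁⟩ := exists_integral_pow_mul_exp_neg_damping_le 1
  obtain ⟨K₂, hK₂, hmoment₂⟩ := exists_integral_pow_mul_exp_neg_damping_le 2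
  refine ⟨3 * K₁ + 32 * K₂, by positivity, fun s n hs hs2 hn => ?_⟩
  have hcompare := abs_integral_mul_cos_sub_sub_le (continuous_exp_neg_damping_eulerWeight hs)
    (fun θ => (exp_pos _).le) (continuous_phase_eulerWeight_sub hs n) (neg_le_self pi_pos.le)
    (hn ▸ abs_phase_eulerWeight_sub_le hs)
  have hshift : tiltedMass s (n + 1) = ∫ θ in -π..π,
      exp (-damping (eulerWeight s) eulerFreq θ) *
        cos (phase (eulerWeight s) eulerFreq θ - n * θ - θ) := by
    simp only [tiltedMass, Nat.cast_succ, add_one_mul, sub_add_eq_sub_sub]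
  rw [hshift, tiltedMass]
  have hhalf : 1 / 2 + 2 / s ≤ 3 / s := by
    rw [← sub_nonneg, show 3 / s - (1 / 2 + 2 / s) = (1 - s / 2) / s by field_simp; ring]
    exact div_nonneg (by linarith) hs.le
  refine hcompare.trans ?_
  calc _ ≤ 3 / s * (K₁ * (s ^ 3) ^ 1 * (s * √s)) +
        32 / s ^ 4 * (K₂ * (s ^ 3) ^ 2 * (s * √s)) := by
        refine add_le_add (mul_le_mul hhalf (hmoment₁ s hs hs2) ?_ (by positivity))
          (mul_le_mul_of_nonneg_left (hmoment₂ s hs hs2) (by positivity))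
        exact intervalIntegral.integral_nonneg (neg_le_self pi_pos.le) fun θ _ => by positivity
    _ = (3 * K₁ + 32 * K₂) * s ^ 2 * (s * √s) := by
        field_simp

theorem exists_abs_numPartitions_succ_mul_exp_neg_sub_le : ∃ C > 0, ∃ s₀ > 0,
    ∀ (s : ℝ) (n : ℕ), 0 < s → s ≤ s₀ → π ^ 2 / 6 / s ^ 2 = n →
      |numPartitions (n + 1) * exp (-s) - numPartitions n| ≤ C * s ^ 2 * numPartitions n := by
  obtain ⟨s₁, hs₁, hlower⟩ := exists_le_tiltedMass
  obtain ⟨K, hK, hdiff⟩ := exists_abs_tiltedMass_succ_sub_le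
  refine ⟨K * exp 16, by positivity, min (1 / 2) s₁, by positivity, fun s n hs hs₀ hn => ?_⟩
  obtain ⟨P, hP, hmass⟩ : ∃ P > 0, ∀ k : ℕ,
      tiltedMass s k = P * (numPartitions k * exp (-((k - n) * s))) := by
    refine ⟨2 * π * exp (-(n * s)) * exp (-∑' x, eulerWeight s x), by positivity, fun k => ?_⟩
    rw [tiltedMass, integral_exp_neg_damping_mul_cos hs,
      show -(k * s) = -(n * s) + -((k - n) * s) by ring, exp_add]
    ring
  have hscale : s * √s ≤ exp 16 * tiltedMass s n := by
    rw [← inv_mul_le_iff₀ (exp_pos _), ← exp_neg]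
    exact hlower s n hs (hs₀.trans (min_le_right _ _)) hn
  have hratio : |tiltedMass s (n + 1) - tiltedMass s n| ≤ K * s ^ 2 * (exp 16 * tiltedMass s n) :=
    (hdiff s n hs (hs₀.trans (min_le_left _ _)) hn).trans (by gcongr)
  simp only [hmass, Nat.cast_succ, add_sub_cancel_left, sub_self, one_mul, zero_mul, neg_zero,
    exp_zero, mul_one, ← mul_sub, abs_mul, abs_of_pos hP] at hratio
  exact le_of_mul_le_mul_left (hratio.trans_eq (by ring)) hP

end SaddlePoint

section Ratio

open Filter Topology

/-- The tilting parameter `s` for which the leading term `π² / (6 s²)` of the mean of the tilted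
partition measure equals `n`. -/
noncomputable def saddle (n : ℕ) : ℝ := π / √6 / √n

lemma saddle_pos {n : ℕ} (hn : 0 < n) : 0 < saddle n := by
  unfold saddle
  positivity

lemma saddle_sq (n : ℕ) : saddle n ^ 2 = π ^ 2 / 6 / n := by
  rw [saddle, div_pow, div_pow, sq_sqrt (by norm_num), sq_sqrt (by positivity)]

lemma tendsto_saddle : Tendsto saddle atTop (𝓝 0) :=
  tendsto_const_nhds.div_atTop (tendsto_sqrt_atTop.comp tendsto_natCast_atTop_atTop)

lemma abs_log_le_two_mul {x δ : ℝ} (hx : |x - 1| ≤ δ) (hδ : δ ≤ 1 / 2) : |log x| ≤ 2 * δ := by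
  obtain ⟨hlower, hupper⟩ := abs_le.1 hx
  have hx0 : 0 < x := by linarith
  have hinv : x⁻¹ - 1 ≤ 2 * δ := by
    rw [show x⁻¹ - 1 = (1 - x) / x by field_simp, div_le_iff₀ hx0]
    nlinarith
  exact abs_le.2 ⟨by linarith [one_sub_inv_le_log_of_pos hx0],
    by linarith [log_le_sub_one_of_pos hx0]⟩

lemma exists_eventually_abs_log_numPartitions_succ_sub_le : ∃ C > 0, ∀ᶠ n : ℕ in atTop,
    |log (numPartitions (n + 1)) - log (numPartitions n) - saddle n| ≤ C / n := by
  obtain ⟨K, hK, s₀, hs₀, hratio⟩ := exists_abs_numPartitions_succ_mul_exp_neg_sub_le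
  refine ⟨2 * (K * (π ^ 2 / 6)), by positivity, ?_⟩
  filter_upwards [eventually_gt_atTop 0, tendsto_saddle.eventually_le_const hs₀,
    (tendsto_const_div_atTop_nhds_zero_nat (K * (π ^ 2 / 6))).eventually_le_const
      (show (0 : ℝ) < 1 / 2 by norm_num)] with n hn hsmall hhalf
  have hp : (0 : ℝ) < numPartitions n := Nat.cast_pos.2 (numPartitions_pos n)
  have hp' : (0 : ℝ) < numPartitions (n + 1) := Nat.cast_pos.2 (numPartitions_pos (n + 1))
  have hquotient : |numPartitions (n + 1) * exp (-saddle n) / numPartitions n - 1| ≤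
      K * (π ^ 2 / 6) / n := by
    rw [div_sub_one hp.ne', abs_div, abs_of_pos hp, div_le_iff₀ hp]
    refine (hratio (saddle n) n (saddle_pos hn) hsmall ?_).trans_eq ?_ <;> rw [saddle_sq]
    · field_simp
    · ring
  have hlog := abs_log_le_two_mul hquotient hhalf
  rw [log_div (by positivity) hp.ne', log_mul hp'.ne' (exp_pos _).ne', log_exp] at hlog
  rw [mul_div_assoc]
  convert! hlog using 2
  ring

lemma abs_saddle_sub_saddle_le {X m : ℕ} (hX : 0 < X) (hm : X ≤ 2 * m) :
    |saddle m - saddle X| ≤ 4 * (|(m : ℝ) - X| / (X * √X)) := by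
  have hX0 : (0 : ℝ) < X := Nat.cast_pos.2 hX
  have hm' : (X : ℝ) ≤ 2 * m := mod_cast hm
  have hm0 : (0 : ℝ) < m := by linarith
  have hconst : π / √6 ≤ 2 := by
    rw [div_le_iff₀ (by positivity)]
    linarith [pi_le_four, (le_sqrt' (by norm_num)).2 (show (2 : ℝ) ^ 2 ≤ 6 by norm_num)]
  have ha := sqrt_pos.2 hX0
  have hb := sqrt_pos.2 hm0
  unfold saddle
  rw [← sq_sqrt hX0.le, ← sq_sqrt hm0.le] at hm' ⊢
  simp only [sqrt_sq (sqrt_nonneg _)]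
  set a := √(X : ℝ)
  set b := √(m : ℝ)
  have hab : a ≤ 2 * b := by nlinarith
  have hfactor : π / √6 / b - π / √6 / a = π / √6 * (-(b ^ 2 - a ^ 2) / ((a + b) * (a * b))) := by
    field_simp
    ring
  rw [hfactor, abs_mul, abs_of_pos (by positivity : 0 < π / √6), abs_div, abs_neg,
    abs_of_pos (by positivity : 0 < (a + b) * (a * b))]
  calc π / √6 * (|b ^ 2 - a ^ 2| / ((a + b) * (a * b)))
      ≤ 2 * (|b ^ 2 - a ^ 2| / (a ^ 2 * a / 2)) := by
        gcongr
        nlinarith [mul_pos ha hb, mul_pos ha ha, mul_pos (mul_pos ha ha) hb]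
    _ = 4 * (|b ^ 2 - a ^ 2| / (a ^ 2 * a)) := by
        field_simp
        ring

lemma abs_sub_le_mul_of_abs_succ_sub_le {h : ℕ → ℝ} {d : ℝ} {m n : ℕ}
    (hd : ∀ k, min m n ≤ k → k < max m n → |h (k + 1) - h k| ≤ d) :
    |h m - h n| ≤ |(m : ℝ) - n| * d := by
  wlog hmn : m ≤ n generalizing m n
  · rw [abs_sub_comm, abs_sub_comm (m : ℝ)]
    exact this (by rwa [min_comm, max_comm]) (le_of_not_ge hmn)
  rw [min_eq_left hmn, max_eq_right hmn] at hd
  have hsum := dist_le_Ico_sum_of_dist_le (f := h) hmn (d := fun _ => d) fun {k} hmk hkn => by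
    rw [dist_comm]
    exact hd k hmk hkn
  rwa [Finset.sum_const, Nat.card_Ico, nsmul_eq_mul, Nat.cast_sub hmn, dist_eq,
    ← abs_of_nonneg (sub_nonneg.2 (Nat.cast_le.2 hmn) : (0 : ℝ) ≤ n - m), abs_sub_comm (n : ℝ)]
    at hsum

lemma exists_abs_log_numPartitions_succ_sub_saddle_le : ∃ C > 0, ∃ N : ℕ, ∀ X k : ℕ,
    N < X → X ≤ 2 * k →
      |log (numPartitions (k + 1)) - log (numPartitions k) - saddle X| ≤
        C * (1 / X + |(k : ℝ) - X| / (X * √X)) := by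
  obtain ⟨C, hC, hstep⟩ := exists_eventually_abs_log_numPartitions_succ_sub_le
  obtain ⟨N, hN⟩ := eventually_atTop.1 hstep
  refine ⟨2 * C + 4, by positivity, 2 * N, fun X k hX hk => ?_⟩
  have hX0 : (0 : ℝ) < X := Nat.cast_pos.2 (by omega)
  have hk' : (X : ℝ) ≤ 2 * k := mod_cast hk
  have hCk : C / k ≤ 2 * C * (1 / X) := by
    rw [mul_one_div, div_le_div_iff₀ (by linarith) hX0]
    nlinarith
  have hlinear : 0 ≤ 1 / (X : ℝ) := by positivity
  have hquadratic : 0 ≤ |(k : ℝ) - X| / (X * √X) := by positivity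
  have htriangle := abs_sub_le (log (numPartitions (k + 1)) - log (numPartitions k))
    (saddle k) (saddle X)
  nlinarith [hN k (by omega), abs_saddle_sub_saddle_le (by omega : 0 < X) hk]

theorem exists_abs_log_numPartitions_sub_le : ∃ C > 0, ∃ N : ℕ, ∀ X m : ℕ, N < X → X ≤ 2 * m →
    |log (numPartitions m) - log (numPartitions X) - (m - X) * saddle X| ≤
      C * (|(m : ℝ) - X| / X + (m - X : ℝ) ^ 2 / (X * √X)) := by
  obtain ⟨C, hC, N, hstep⟩ := exists_abs_log_numPartitions_succ_sub_saddle_le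
  refine ⟨C, hC, N, fun X m hX hm => ?_⟩
  have hincrement (k : ℕ) (hmin : min m X ≤ k) (hmax : k < max m X) :
      |(log (numPartitions (k + 1)) - (k + 1 : ℕ) * saddle X) -
        (log (numPartitions k) - k * saddle X)| ≤
      C * (1 / X + |(m : ℝ) - X| / (X * √X)) := by
    have hdist : |(k : ℝ) - X| ≤ |(m : ℝ) - X| :=
      Set.abs_sub_left_of_mem_uIcc
        ⟨by rw [inf_comm]; exact_mod_cast hmin, by rw [sup_comm]; exact_mod_cast hmax.le⟩
    calc _ = |log (numPartitions (k + 1)) - log (numPartitions k) - saddle X| := by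
          push_cast
          ring_nf
      _ ≤ C * (1 / X + |(k : ℝ) - X| / (X * √X)) := hstep X k hX (by omega)
      _ ≤ C * (1 / X + |(m : ℝ) - X| / (X * √X)) := by gcongr
  calc _ = |log (numPartitions m) - m * saddle X - (log (numPartitions X) - X * saddle X)| := by
        ring_nf
    _ ≤ |(m : ℝ) - X| * (C * (1 / X + |(m : ℝ) - X| / (X * √X))) :=
        abs_sub_le_mul_of_abs_succ_sub_le (h := fun k => log (numPartitions k) - k * saddle X)
          hincrement
    _ = C * (|(m : ℝ) - X| / X + (m - X : ℝ) ^ 2 / (X * √X)) := by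
        rw [← sq_abs (m - X : ℝ)]
        ring

lemma abs_exp_sub_one_le_mul_exp (u : ℝ) : |exp u - 1| ≤ |u| * exp |u| := by
  have h := Complex.norm_exp_sub_sum_le_norm_mul_exp u 1
  rw [Finset.sum_range_one, pow_zero, Nat.factorial_zero, Nat.cast_one, div_one, pow_one,
    ← Complex.ofReal_exp, ← Complex.ofReal_one, ← Complex.ofReal_sub, Complex.norm_real,
    Complex.norm_real] at h
  exact h

lemma abs_div_sub_exp_le {p q t δ R : ℝ} (hp : 0 < p) (hq : 0 < q)
    (hlog : |log p - log q - t| ≤ δ) (hδ : δ ≤ R) : |p / q - exp t| ≤ exp R * exp t * δ := by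
  have hquotient : p / q = exp t * exp (log p - log q - t) := by
    rw [← exp_add, add_sub_cancel, exp_sub, exp_log hp, exp_log hq]
  calc |p / q - exp t| = exp t * |exp (log p - log q - t) - 1| := by
        rw [hquotient, ← mul_sub_one, abs_mul, abs_exp]
    _ ≤ exp t * (δ * exp R) := by
        gcongr
        refine (abs_exp_sub_one_le_mul_exp _).trans ?_
        exact mul_le_mul hlog (exp_le_exp.2 (hlog.trans hδ)) (exp_pos _).le
          ((abs_nonneg _).trans hlog)
    _ = exp R * exp t * δ := by ring

end Ratio

lemma rpow_three_div_two_eq {x : ℝ} (hx : 0 ≤ x) : x ^ (3 / 2 : ℝ) = x * √x := by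
  rw [show (3 / 2 : ℝ) = 1 + 1 / 2 by norm_num, rpow_add_of_nonneg hx (by norm_num) (by norm_num),
    rpow_one, sqrt_eq_rpow]

lemma sq_rpow_three_div_four {x : ℝ} (hx : 0 ≤ x) : (x ^ (3 / 4 : ℝ)) ^ 2 = x * √x := by
  rw [← rpow_three_div_two_eq hx, ← rpow_mul_natCast hx]
  norm_num

lemma two_mul_abs_le_of_sq_le {A x r : ℝ} (hx : 0 ≤ x) (hA : (2 * A) ^ 4 ≤ x)
    (hr : r ^ 2 ≤ A ^ 2 * (x * √x)) : 2 * |r| ≤ x := by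
  have hA2 : (2 * A) ^ 2 ≤ √x := le_sqrt_of_sq_le (by rwa [← pow_mul])
  refine le_of_sq_le_sq ?_ hx
  calc (2 * |r|) ^ 2 = 4 * r ^ 2 := by
        rw [mul_pow, sq_abs]
        norm_num
    _ ≤ x * √x * (2 * A) ^ 2 := by linarith
    _ ≤ x * √x * √x := by gcongr
    _ = x ^ 2 := by rw [mul_assoc, mul_self_sqrt hx, sq]

theorem stmt_7_general (A : ℝ) :
    ∃ C > (0 : ℝ), ∃ X₀ : ℕ, ∀ X : ℕ, X₀ ≤ X → ∀ r : ℤ,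
      |(r : ℝ)| ≤ A * (X : ℝ) ^ ((3 : ℝ) / 4) →
      |(partitionCount ((X : ℤ) + r) : ℝ) / (partitionCount (X : ℤ) : ℝ) -
          exp (2 * π / √6 * (r : ℝ) / (2 * √X))| ≤
        C * exp (2 * π / √6 * (r : ℝ) / (2 * √X)) *
          (|(r : ℝ)| / (X : ℝ) + (r : ℝ) ^ 2 / (X : ℝ) ^ ((3 : ℝ) / 2)) := by
  obtain ⟨C, hC, N, hlog⟩ := exists_abs_log_numPartitions_sub_le
  refine ⟨exp (C * (1 + A ^ 2)) * C, by positivity, N + ⌈(2 * A) ^ 4⌉₊ + 1, fun X hX r hr => ?_⟩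
  have hX0 : (0 : ℝ) < X := Nat.cast_pos.2 (by omega)
  have hA : (2 * A) ^ 4 ≤ X := (Nat.le_ceil _).trans (mod_cast (by omega))
  have hr2 : (r : ℝ) ^ 2 ≤ A ^ 2 * (X * √X) := by
    rw [← sq_abs, ← sq_rpow_three_div_four hX0.le, ← mul_pow]
    exact pow_le_pow_left₀ (abs_nonneg _) hr 2
  have hrX : 2 * |(r : ℝ)| ≤ X := two_mul_abs_le_of_sq_le hX0.le hA hr2
  have hrX' : 2 * |r| ≤ (X : ℤ) := mod_cast hrX
  obtain ⟨m, rfl⟩ : ∃ m : ℕ, r = m - X :=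
    ⟨((X : ℤ) + r).toNat, by linarith [Int.toNat_of_nonneg (by grind : 0 ≤ (X : ℤ) + r)]⟩
  have hlog_m := hlog X m (by omega) (by grind)
  have hexponent : 2 * π / √6 * (m - X) / (2 * √X) = (m - X) * saddle X := by
    unfold saddle
    field_simp
  push_cast at hr2 hrX ⊢
  rw [add_sub_cancel, partitionCount_natCast, partitionCount_natCast, hexponent,
    rpow_three_div_two_eq hX0.le, mul_right_comm (exp _) C, mul_assoc _ C]
  refine abs_div_sub_exp_le (Nat.cast_pos.2 (numPartitions_pos m))
    (Nat.cast_pos.2 (numPartitions_pos X)) hlog_m ?_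
  gcongr
  · exact (div_le_one hX0).2 (by linarith [abs_nonneg (m - X : ℝ)])
  · exact (div_le_iff₀ (by positivity)).2 hr2

theorem stmt_7 :
    ∃ C > (0 : ℝ), ∃ X₀ : ℕ, ∀ X : ℕ, X₀ ≤ X → ∀ r : ℤ,
      |(r : ℝ)| ≤ (X : ℝ) ^ ((3 : ℝ) / 4) →
      |(partitionCount ((X : ℤ) + r) : ℝ) / (partitionCount (X : ℤ) : ℝ) -
          Real.exp (2 * π / Real.sqrt 6 * (r : ℝ) / (2 * Real.sqrt X))| ≤
        C * Real.exp (2 * π / Real.sqrt 6 * (r : ℝ) / (2 * Real.sqrt X)) *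
          (1 / (X : ℝ) + |(r : ℝ)| / (X : ℝ) + (r : ℝ) ^ 2 / (X : ℝ) ^ ((3 : ℝ) / 2)) := by
  obtain ⟨C, hC, X₀, h⟩ := stmt_7_general 1
  refine ⟨C, hC, X₀, fun X hX r hr => (h X hX r (by rwa [one_mul])).trans ?_⟩
  gcongr
  exact le_add_of_nonneg_left (by positivity)
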